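/- arXiv:1812.05684 — 7 statements merged into one kernel-verified Lean document; each statement's English description precedes it below -/
import Mathlib

section
/- For all positive integers n₁, n₂ and k, writing A = 10n₁, B = 10n₂−1, and N = 4k·A·B − 10(n₁+n₂) + 1 (so that N = 4kAB − A − B > 0), the rational number 4/N equals 1/(kAB) + 1/(kA·N) + 1/(kB·N). -/
theorem erdos_straus_identity_11 (n₁ n₂ k : ℤ) (h₁ : 0 < n₁) (h₂ : 0 < n₂)
    (hk : 0 < k) :
    (4 : ℚ) / ((4 * k * (10 * n₁) * (10 * n₂ - 1) - 10 * (n₁ + n₂) + 1 : ℤ)) =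
      1 / ((k : ℚ) * ((10 * n₁ : ℤ)) * ((10 * n₂ - 1 : ℤ))) +
        1 / ((k : ℚ) * ((10 * n₁ : ℤ)) *
          ((4 * k * (10 * n₁) * (10 * n₂ - 1) - 10 * (n₁ + n₂) + 1 : ℤ))) +
        1 / ((k : ℚ) * ((10 * n₂ - 1 : ℤ)) *
          ((4 * k * (10 * n₁) * (10 * n₂ - 1) - 10 * (n₁ + n₂) + 1 : ℤ))) := by
  have hA : 0 < 10 * n₁ := by linarith
  have hB : 0 < 10 * n₂ - 1 := by linarith
  have hN : 0 < 4 * k * (10 * n₁) * (10 * n₂ - 1) - 10 * (n₁ + n₂) + 1 := by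
    have hAB : 0 < (10 * n₁) * (10 * n₂ - 1) := mul_pos hA hB
    have h3 : (10 * n₁) * (10 * n₂ - 1) ≤ k * ((10 * n₁) * (10 * n₂ - 1)) :=
      le_mul_of_one_le_left hAB.le hk
    nlinarith [mul_nonneg (by linarith : (0 : ℤ) ≤ 10 * n₁ - 1)
      (by linarith : (0 : ℤ) ≤ 10 * n₂ - 1 - 1)]
  generalize hNe : 4 * k * (10 * n₁) * (10 * n₂ - 1) - 10 * (n₁ + n₂) + 1 = N at hN ⊢
  have hE : N + 10 * n₁ + (10 * n₂ - 1) = 4 * k * (10 * n₁) * (10 * n₂ - 1) := by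
    rw [← hNe]; ring
  clear hNe
  generalize 10 * n₁ = A at *
  generalize 10 * n₂ - 1 = B at *
  have hE' : (N : ℚ) + A + B = 4 * k * A * B := by exact_mod_cast hE
  have a : (A : ℚ) ≠ 0 := by exact_mod_cast hA.ne'
  have b : (B : ℚ) ≠ 0 := by exact_mod_cast hB.ne'
  have c : (N : ℚ) ≠ 0 := by exact_mod_cast hN.ne'
  have d : (k : ℚ) ≠ 0 := by exact_mod_cast hk.ne'
  field_simp
  linarith
end

section
/- For all positive integers n₁, n₂ and k, writing A = 10n₁−9, B = 10n₂−2, and N = 4k·A·B − 10(n₁+n₂) + 11 (so that N = 4kAB − A − B > 0), the rational number 4/N equals 1/(kAB) + 1/(kA·N) + 1/(kB·N). -/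
theorem erdos_straus_identity_12 (n₁ n₂ k : ℤ) (h₁ : 0 < n₁) (h₂ : 0 < n₂)
    (hk : 0 < k) :
    (4 : ℚ) / ((4 * k * (10 * n₁ - 9) * (10 * n₂ - 2) - 10 * (n₁ + n₂) + 11 : ℤ)) =
      1 / ((k : ℚ) * ((10 * n₁ - 9 : ℤ)) * ((10 * n₂ - 2 : ℤ))) +
        1 / ((k : ℚ) * ((10 * n₁ - 9 : ℤ)) *
          ((4 * k * (10 * n₁ - 9) * (10 * n₂ - 2) - 10 * (n₁ + n₂) + 11 : ℤ))) +
        1 / ((k : ℚ) * ((10 * n₂ - 2 : ℤ)) *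
          ((4 * k * (10 * n₁ - 9) * (10 * n₂ - 2) - 10 * (n₁ + n₂) + 11 : ℤ))) := by
  have hA : 0 < 10 * n₁ - 9 := by omega
  have hB : 0 < 10 * n₂ - 2 := by omega
  have hN : 4 * k * (10 * n₁ - 9) * (10 * n₂ - 2) - 10 * (n₁ + n₂) + 11
      = 4 * k * (10 * n₁ - 9) * (10 * n₂ - 2) - (10 * n₁ - 9) - (10 * n₂ - 2) := by ring
  rw [hN]
  generalize 10 * n₁ - 9 = A at *
  generalize 10 * n₂ - 2 = B at *
  have hAB : 0 < A * B := mul_pos hA hB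
  have h1 : A * B ≤ k * (A * B) := le_mul_of_one_le_left hAB.le hk
  have h2 : A ≤ A * B := le_mul_of_one_le_right hA.le hB
  have h3 : B ≤ A * B := le_mul_of_one_le_left hB.le hA
  have hNpos : 0 < 4 * k * A * B - A - B := by nlinarith
  obtain ⟨N, hNe⟩ : ∃ N, N = 4 * k * A * B - A - B := ⟨_, rfl⟩
  rw [← hNe] at hNpos ⊢
  have e : (N : ℚ) = 4 * k * A * B - A - B := by rw [hNe]; push_cast; ring
  have a : (A : ℚ) ≠ 0 := by exact_mod_cast hA.ne'
  have b : (B : ℚ) ≠ 0 := by exact_mod_cast hB.ne'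
  have c : (k : ℚ) ≠ 0 := by exact_mod_cast hk.ne'
  have d : (N : ℚ) ≠ 0 := by exact_mod_cast hNpos.ne'
  field_simp
  linear_combination -e
end

section
/- For all positive integers n₁, n₂ and k, writing A = 10n₁−8, B = 10n₂−3, and N = 4k·A·B − 10(n₁+n₂) + 11 (so that N = 4kAB − A − B > 0), the rational number 4/N equals 1/(kAB) + 1/(kA·N) + 1/(kB·N). -/
theorem erdos_straus_identity_13 (n₁ n₂ k : ℤ) (h₁ : 0 < n₁) (h₂ : 0 < n₂)
    (hk : 0 < k) :
    (4 : ℚ) / ((4 * k * (10 * n₁ - 8) * (10 * n₂ - 3) - 10 * (n₁ + n₂) + 11 : ℤ)) =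
      1 / ((k : ℚ) * ((10 * n₁ - 8 : ℤ)) * ((10 * n₂ - 3 : ℤ))) +
        1 / ((k : ℚ) * ((10 * n₁ - 8 : ℤ)) *
          ((4 * k * (10 * n₁ - 8) * (10 * n₂ - 3) - 10 * (n₁ + n₂) + 11 : ℤ))) +
        1 / ((k : ℚ) * ((10 * n₂ - 3 : ℤ)) *
          ((4 * k * (10 * n₁ - 8) * (10 * n₂ - 3) - 10 * (n₁ + n₂) + 11 : ℤ))) := by
  obtain ⟨A, hA⟩ : ∃ A : ℤ, A = 10 * n₁ - 8 := ⟨_, rfl⟩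
  obtain ⟨B, hB⟩ : ∃ B : ℤ, B = 10 * n₂ - 3 := ⟨_, rfl⟩
  have hN : 4 * k * (10 * n₁ - 8) * (10 * n₂ - 3) - 10 * (n₁ + n₂) + 11
      = 4 * k * A * B - A - B := by
    subst hA hB; ring
  rw [hN, ← hA, ← hB]
  have hA2 : 2 ≤ A := by omega
  have hB2 : 2 ≤ B := by omega
  have hpos : 0 < 4 * k * A * B - A - B := by
    have hAB : 0 < A * B := by positivity
    have h1 : A * B ≤ k * (A * B) := by nlinarith
    nlinarith
  obtain ⟨N, hNdef⟩ : ∃ N : ℤ, N = 4 * k * A * B - A - B := ⟨_, rfl⟩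
  rw [← hNdef] at hpos ⊢
  have hk0 : (k : ℚ) ≠ 0 := by exact_mod_cast hk.ne'
  have hA0 : (A : ℚ) ≠ 0 := by
    have : A ≠ 0 := by omega
    exact_mod_cast this
  have hB0 : (B : ℚ) ≠ 0 := by
    have : B ≠ 0 := by omega
    exact_mod_cast this
  have hN0 : (N : ℚ) ≠ 0 := by exact_mod_cast hpos.ne'
  have hNq : (N : ℚ) = 4 * k * A * B - A - B := by
    rw [hNdef]; push_cast; ring
  field_simp
  linear_combination -hNq
end

section
/- For all positive integers n₁, n₂ and k, writing A = 10n₁−6, B = 10n₂−5, and N = 4k·A·B − 10(n₁+n₂) + 11 (so that N = 4kAB − A − B > 0), the rational number 4/N equals 1/(kAB) + 1/(kA·N) + 1/(kB·N). -/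
theorem erdos_straus_identity_14 (n₁ n₂ k : ℤ) (h₁ : 0 < n₁) (h₂ : 0 < n₂)
    (hk : 0 < k) :
    (4 : ℚ) / ((4 * k * (10 * n₁ - 6) * (10 * n₂ - 5) - 10 * (n₁ + n₂) + 11 : ℤ)) =
      1 / ((k : ℚ) * ((10 * n₁ - 6 : ℤ)) * ((10 * n₂ - 5 : ℤ))) +
        1 / ((k : ℚ) * ((10 * n₁ - 6 : ℤ)) *
          ((4 * k * (10 * n₁ - 6) * (10 * n₂ - 5) - 10 * (n₁ + n₂) + 11 : ℤ))) +
        1 / ((k : ℚ) * ((10 * n₂ - 5 : ℤ)) *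
          ((4 * k * (10 * n₁ - 6) * (10 * n₂ - 5) - 10 * (n₁ + n₂) + 11 : ℤ))) := by
  obtain ⟨A, hA⟩ : ∃ A : ℤ, A = 10 * n₁ - 6 := ⟨_, rfl⟩
  obtain ⟨B, hB⟩ : ∃ B : ℤ, B = 10 * n₂ - 5 := ⟨_, rfl⟩
  have hA4 : 4 ≤ A := by omega
  have hB5 : 5 ≤ B := by omega
  obtain ⟨N, hN⟩ : ∃ N : ℤ,
      N = 4 * k * (10 * n₁ - 6) * (10 * n₂ - 5) - 10 * (n₁ + n₂) + 11 := ⟨_, rfl⟩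
  have hN' : N = 4 * k * A * B - A - B := by rw [hN, hA, hB]; ring
  rw [← hN, ← hA, ← hB]
  have hAB : 0 < A * B := by positivity
  have hkAB : A * B ≤ k * (A * B) := le_mul_of_one_le_left hAB.le hk
  have hNpos : 0 < N := by nlinarith [mul_nonneg (sub_nonneg.2 hA4) (sub_nonneg.2 hB5)]
  have hNq : (N : ℚ) = 4 * k * A * B - A - B := by rw [hN']; push_cast; ring
  have a : (A : ℚ) ≠ 0 := by exact_mod_cast (by omega : A ≠ 0)
  have b : (B : ℚ) ≠ 0 := by exact_mod_cast (by omega : B ≠ 0)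
  have c : (k : ℚ) ≠ 0 := by exact_mod_cast hk.ne'
  have d : (N : ℚ) ≠ 0 := by exact_mod_cast hNpos.ne'
  field_simp
  linear_combination -hNq
end

section
/- For all positive integers n₁, n₂ and k, writing A = 10n₁−9, B = 10n₂−4, and N = 4k·A·B − 10(n₁+n₂) + 13 (so that N = 4kAB − A − B > 0), the rational number 4/N equals 1/(kAB) + 1/(kA·N) + 1/(kB·N). -/
theorem erdos_straus_identity_16 (n₁ n₂ k : ℤ) (h₁ : 0 < n₁) (h₂ : 0 < n₂)
    (hk : 0 < k) :
    (4 : ℚ) / ((4 * k * (10 * n₁ - 9) * (10 * n₂ - 4) - 10 * (n₁ + n₂) + 13 : ℤ)) =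
      1 / ((k : ℚ) * ((10 * n₁ - 9 : ℤ)) * ((10 * n₂ - 4 : ℤ))) +
        1 / ((k : ℚ) * ((10 * n₁ - 9 : ℤ)) *
          ((4 * k * (10 * n₁ - 9) * (10 * n₂ - 4) - 10 * (n₁ + n₂) + 13 : ℤ))) +
        1 / ((k : ℚ) * ((10 * n₂ - 4 : ℤ)) *
          ((4 * k * (10 * n₁ - 9) * (10 * n₂ - 4) - 10 * (n₁ + n₂) + 13 : ℤ))) := by
  obtain ⟨A, hA⟩ : ∃ A : ℤ, A = 10 * n₁ - 9 := ⟨_, rfl⟩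
  obtain ⟨B, hB⟩ : ∃ B : ℤ, B = 10 * n₂ - 4 := ⟨_, rfl⟩
  have hN : 4 * k * (10 * n₁ - 9) * (10 * n₂ - 4) - 10 * (n₁ + n₂) + 13
      = 4 * k * A * B - A - B := by
    rw [hA, hB]; ring
  rw [hN, ← hA, ← hB]
  have hA1 : 1 ≤ A := by omega
  have hB1 : 1 ≤ B := by omega
  have hAB : 1 ≤ A * B := by nlinarith
  have hkAB : A * B ≤ k * (A * B) := by nlinarith
  have hpos : 0 < 4 * k * A * B - A - B := by nlinarith
  obtain ⟨N, hNe⟩ : ∃ N : ℤ, N = 4 * k * A * B - A - B := ⟨_, rfl⟩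
  rw [← hNe] at hpos ⊢
  have hq : (N : ℚ) = 4 * k * A * B - A - B := by exact_mod_cast hNe
  have a0 : (A : ℚ) ≠ 0 := by exact_mod_cast (by omega : A ≠ 0)
  have b0 : (B : ℚ) ≠ 0 := by exact_mod_cast (by omega : B ≠ 0)
  have k0 : (k : ℚ) ≠ 0 := by exact_mod_cast hk.ne'
  have n0 : (N : ℚ) ≠ 0 := by exact_mod_cast hpos.ne'
  field_simp
  linear_combination -hq
end

section
/- For all positive integers n₁, n₂ and k, writing A = 10n₁, B = 10n₂−7, and N = 4k·A·B − 10(n₁+n₂) + 7 (so that N = 4kAB − A − B > 0), the rational number 4/N equals 1/(kAB) + 1/(kA·N) + 1/(kB·N). -/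
theorem erdos_straus_aux (k a b m : ℤ) (hk : 0 < k) (ha : 0 < a) (hb : 0 < b)
    (hm : m = 4 * k * a * b - a - b) :
    (4 : ℚ) / (m : ℚ) = 1 / ((k : ℚ) * (a : ℚ) * (b : ℚ)) + 1 / ((k : ℚ) * (a : ℚ) * (m : ℚ)) +
      1 / ((k : ℚ) * (b : ℚ) * (m : ℚ)) := by
  have hab : 0 < a * b := mul_pos ha hb
  have h1 : a * b ≤ k * (a * b) := by nlinarith
  have h2 : 0 ≤ (a - 1) * (b - 1) := mul_nonneg (by linarith) (by linarith)
  have hm0 : 0 < m := by nlinarith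
  have hkq : (k : ℚ) ≠ 0 := by exact_mod_cast hk.ne'
  have haq : (a : ℚ) ≠ 0 := by exact_mod_cast ha.ne'
  have hbq : (b : ℚ) ≠ 0 := by exact_mod_cast hb.ne'
  have hmq : (m : ℚ) ≠ 0 := by exact_mod_cast hm0.ne'
  have hq : (m : ℚ) = 4 * k * a * b - a - b := by rw [hm]; push_cast; ring
  field_simp
  linarith

theorem erdos_straus_identity_18 (n₁ n₂ k : ℤ) (h₁ : 0 < n₁) (h₂ : 0 < n₂)
    (hk : 0 < k) :
    (4 : ℚ) / ((4 * k * (10 * n₁) * (10 * n₂ - 7) - 10 * (n₁ + n₂) + 7 : ℤ)) =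
      1 / ((k : ℚ) * ((10 * n₁ : ℤ)) * ((10 * n₂ - 7 : ℤ))) +
        1 / ((k : ℚ) * ((10 * n₁ : ℤ)) *
          ((4 * k * (10 * n₁) * (10 * n₂ - 7) - 10 * (n₁ + n₂) + 7 : ℤ))) +
        1 / ((k : ℚ) * ((10 * n₂ - 7 : ℤ)) *
          ((4 * k * (10 * n₁) * (10 * n₂ - 7) - 10 * (n₁ + n₂) + 7 : ℤ))) := by
  exact erdos_straus_aux k _ _ _ hk (by linarith) (by linarith) (by ring)
end

section
/- For all positive integers n₁, n₂ and k, writing A = 10n₁, B = 10n₂−9, and N = 4k·A·B − 10(n₁+n₂) + 9 (so that N = 4kAB − A − B > 0), the rational number 4/N equals 1/(kAB) + 1/(kA·N) + 1/(kB·N). -/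
theorem erdos_straus_identity_19 (n₁ n₂ k : ℤ) (h₁ : 0 < n₁) (h₂ : 0 < n₂)
    (hk : 0 < k) :
    (4 : ℚ) / ((4 * k * (10 * n₁) * (10 * n₂ - 9) - 10 * (n₁ + n₂) + 9 : ℤ)) =
      1 / ((k : ℚ) * ((10 * n₁ : ℤ)) * ((10 * n₂ - 9 : ℤ))) +
        1 / ((k : ℚ) * ((10 * n₁ : ℤ)) *
          ((4 * k * (10 * n₁) * (10 * n₂ - 9) - 10 * (n₁ + n₂) + 9 : ℤ))) +
        1 / ((k : ℚ) * ((10 * n₂ - 9 : ℤ)) *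
          ((4 * k * (10 * n₁) * (10 * n₂ - 9) - 10 * (n₁ + n₂) + 9 : ℤ))) := by
  obtain ⟨A, hA⟩ : ∃ A : ℤ, A = 10 * n₁ := ⟨_, rfl⟩
  obtain ⟨B, hB⟩ : ∃ B : ℤ, B = 10 * n₂ - 9 := ⟨_, rfl⟩
  have hN : 4 * k * (10 * n₁) * (10 * n₂ - 9) - 10 * (n₁ + n₂) + 9
      = 4 * k * A * B - A - B := by
    rw [hA, hB]; ring
  rw [hN, ← hA, ← hB]
  have hA1 : 1 ≤ A := by omega
  have hB1 : 1 ≤ B := by omega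
  have hAB : 1 ≤ A * B := by nlinarith
  have hkAB : A * B ≤ k * (A * B) := by nlinarith
  have hpos : 0 < 4 * k * A * B - A - B := by
    nlinarith [mul_nonneg (sub_nonneg.2 hA1) (sub_nonneg.2 hB1)]
  obtain ⟨N, hNd⟩ : ∃ N : ℤ, N = 4 * k * A * B - A - B := ⟨_, rfl⟩
  rw [← hNd] at hpos ⊢
  have hq : (N : ℚ) = 4 * k * A * B - A - B := by rw [hNd]; push_cast; ring
  have a0 : (A : ℚ) ≠ 0 := by exact_mod_cast (by omega : A ≠ 0)
  have b0 : (B : ℚ) ≠ 0 := by exact_mod_cast (by omega : B ≠ 0)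
  have k0 : (k : ℚ) ≠ 0 := by exact_mod_cast hk.ne'
  have N0 : (N : ℚ) ≠ 0 := by exact_mod_cast hpos.ne'
  field_simp
  linarith
end
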